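/- (Laguerre's theorem.) Let f be entire of LP form whose zeros are all negative reals; that is, in its LP data, m = 0 and α_j ≤ 0 for every j. For p = Σ_k a_k·X^k ∈ ℝ[X], define f(X·d/dX)p := Σ_k a_k·f(k)·X^k. If all complex roots of p are real, then all complex roots of f(X·d/dX)p are real. -/

import Mathlib

/-!
A sequence `γ : ℕ → ℂ` acts on polynomials by `∑ a_k X^k ↦ ∑ a_k γ_k X^k`. Call it a real-root
multiplier if this action preserves the property of having no zero off the real axis. The theorem
says that `k ↦ f k` is a real-root multiplier.

Such multipliers are closed under products, and they contain three basic families: the nonzero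
constants; the sequences `k ↦ exp (a k)`, which rescale the variable; and `k ↦ 1 + b k` with
`b ≥ 0`. For the latter, a zero `z` of `P + b X P'` that is not a zero of `P` satisfies
`1 / z + b ∑ 1 / (z - r) = 0`, the sum running over the real roots `r` of `P`; every term on the
left has imaginary part of the sign opposite to that of `z`, so `z` is real.

Multipliers are also closed under pointwise limits with nonzero values (`isMultiplier_of_tendsto`):
a polynomial of degree `d` with only real roots satisfies `|P z| ≥ |lc P| |Im z|^d`, and this
inequality passes to the limit. This gives the Gaussian `exp (-σ² k² / 2)` as the limit of
`((1 + |σ| k / √m) exp (-|σ| k / √m))^m`, so all partial products defining `f` are multipliers.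
Finally `f k ≠ 0` by `(1 + x) exp (-x) ≥ exp (-x²)` for `x ≥ 0` and the summability of `α_j²`, so `f`
itself is a multiplier by the same closure property.
-/

open Complex Filter Topology Polynomial

/-! ### Diagonal operators and multipliers -/

/-- `P` is a nonzero polynomial all of whose complex roots are real; being nonzero is implied, since
the zero polynomial vanishes off the real axis. -/
def RealRooted (P : ℂ[X]) : Prop := ∀ z : ℂ, z.im ≠ 0 → P.eval z ≠ 0

/-- The diagonal operator `∑ a_k X^k ↦ ∑ a_k γ_k X^k`. -/
noncomputable def diagOp (γ : ℕ → ℂ) (P : ℂ[X]) : ℂ[X] :=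
  ∑ k ∈ Finset.range (P.natDegree + 1), Polynomial.C (P.coeff k * γ k) * Polynomial.X ^ k

/-- `γ` is a real-root multiplier: its diagonal operator preserves `RealRooted`. -/
def IsMultiplier (γ : ℕ → ℂ) : Prop := ∀ P : ℂ[X], RealRooted P → RealRooted (diagOp γ P)

lemma diagOp_coeff (γ : ℕ → ℂ) (P : ℂ[X]) (k : ℕ) : (diagOp γ P).coeff k = P.coeff k * γ k := by
  simp only [diagOp, finsetSum_coeff, coeff_C_mul, coeff_X_pow, mul_ite, mul_one, mul_zero,
    Finset.sum_ite_eq, Finset.mem_range]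
  split_ifs with h
  · rfl
  · rw [coeff_eq_zero_of_natDegree_lt (by omega), zero_mul]

lemma diagOp_eval (γ : ℕ → ℂ) (P : ℂ[X]) (z : ℂ) :
    (diagOp γ P).eval z =
      ∑ k ∈ Finset.range (P.natDegree + 1), P.coeff k * γ k * z ^ k := by
  simp [diagOp, eval_finsetSum]

lemma RealRooted.ne_zero {P : ℂ[X]} (h : RealRooted P) : P ≠ 0 := by
  rintro rfl
  exact h I (by simp) (by simp)

lemma IsMultiplier.mul {γ δ : ℕ → ℂ} (hγ : IsMultiplier γ) (hδ : IsMultiplier δ) :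
    IsMultiplier (fun k => γ k * δ k) := by
  intro P hP
  have : diagOp (fun k => γ k * δ k) P = diagOp δ (diagOp γ P) := by
    ext k
    simp only [diagOp_coeff, mul_assoc]
  rw [this]
  exact hδ _ (hγ _ hP)

lemma isMultiplier_const {C : ℂ} (hC : C ≠ 0) : IsMultiplier (fun _ => C) := by
  intro P hP z hz
  have : diagOp (fun _ => C) P = Polynomial.C C * P := by
    ext k
    simp [diagOp_coeff, mul_comm]
  rw [this, eval_mul, eval_C]
  exact mul_ne_zero hC (hP z hz)

lemma IsMultiplier.pow {γ : ℕ → ℂ} (hγ : IsMultiplier γ) (m : ℕ) :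
    IsMultiplier (fun k => γ k ^ m) := by
  induction m with
  | zero => simpa using isMultiplier_const one_ne_zero
  | succ m ih => simpa only [pow_succ] using ih.mul hγ

lemma IsMultiplier.prod {γ : ℕ → ℕ → ℂ} (hγ : ∀ j, IsMultiplier (γ j)) (N : ℕ) :
    IsMultiplier (fun k => ∏ j ∈ Finset.range N, γ j k) := by
  induction N with
  | zero => simpa using isMultiplier_const one_ne_zero
  | succ N ih => simpa only [Finset.prod_range_succ] using ih.mul (hγ N)

/-! ### Basic multipliers -/

lemma isMultiplier_exp (a : ℝ) : IsMultiplier (fun k => Complex.exp ((a : ℂ) * k)) := by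
  intro P hP z hz
  have : diagOp (fun k => Complex.exp ((a : ℂ) * k)) P
      = P.comp (Polynomial.C ((Real.exp a : ℝ) : ℂ) * X) := by
    ext k
    rw [diagOp_coeff, comp_C_mul_X_coeff, mul_comm (a : ℂ), Complex.exp_nat_mul, ofReal_exp]
  rw [this, eval_comp]
  refine hP _ ?_
  simp only [eval_mul, eval_C, eval_X, im_ofReal_mul]
  exact mul_ne_zero (Real.exp_pos a).ne' hz

/-- For `z` in either half plane, `1 / (z - r)` with `r` real lies in the opposite one. -/
lemma inv_sub_im {z r : ℂ} (hr : r.im = 0) : (1 / (z - r)).im = -z.im / normSq (z - r) := by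
  rw [one_div, inv_im, sub_im, hr, sub_zero]

lemma isMultiplier_linear {b : ℝ} (hb : 0 ≤ b) : IsMultiplier (fun k => 1 + (b : ℂ) * k) := by
  intro P hP z hz
  have hT : diagOp (fun k => 1 + (b : ℂ) * k) P = P + Polynomial.C (b : ℂ) * (X * derivative P) := by
    ext k
    rw [diagOp_coeff, coeff_add, coeff_C_mul]
    cases k with
    | zero => simp
    | succ k =>
      rw [coeff_X_mul, coeff_derivative]
      push_cast
      ring
  have hPz := hP z hz
  have hz0 : z ≠ 0 := by
    rintro rfl
    exact hz (by simp)
  rw [hT]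
  intro h0
  simp only [eval_add, eval_mul, eval_C, eval_X] at h0
  have hlog := (IsAlgClosed.splits P).eval_derivative_div_eval_of_ne_zero hPz
  have key : 1 / z + (b : ℂ) * (P.roots.map fun r => 1 / (z - r)).sum = 0 := by
    rw [← hlog]
    field_simp
    linear_combination h0
  have hsum : ∀ s : Multiset ℂ, (∀ r ∈ s, r.im = 0) →
      ∃ t : ℝ, 0 ≤ t ∧ ((s.map fun r => 1 / (z - r)).sum).im = -z.im * t := by
    intro s
    induction s using Multiset.induction_on with
    | empty => exact fun _ => ⟨0, le_rfl, by simp⟩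
    | cons r s ih =>
      intro h
      obtain ⟨t, ht, e⟩ := ih fun r hr => h r (Multiset.mem_cons_of_mem hr)
      refine ⟨(normSq (z - r))⁻¹ + t, by have := normSq_nonneg (z - r); positivity, ?_⟩
      rw [Multiset.map_cons, Multiset.sum_cons, add_im, e,
        inv_sub_im (h r (Multiset.mem_cons_self r s))]
      ring
  obtain ⟨t, ht, e⟩ := hsum P.roots fun r hr => by
    by_contra h
    exact hP r h (isRoot_of_mem_roots hr)
  have him := congrArg Complex.im key
  rw [add_im, im_ofReal_mul, e, one_div, inv_im, zero_im] at him
  have hn : 0 < (normSq z)⁻¹ := inv_pos.2 (normSq_pos.2 hz0)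
  have : -z.im * ((normSq z)⁻¹ + b * t) = 0 := by
    rw [← him]
    ring
  have hpos : 0 < (normSq z)⁻¹ + b * t := by positivity
  exact mul_ne_zero (neg_ne_zero.2 hz) hpos.ne' this

/-! ### Pointwise limits -/

/-- Quantitative form of real-rootedness: each of the `natDegree P` root factors `z - r` has norm
at least `|Im z|`. -/
lemma RealRooted.le_norm_eval {P : ℂ[X]} (hP : RealRooted P) (z : ℂ) :
    ‖P.leadingCoeff‖ * |z.im| ^ P.natDegree ≤ ‖P.eval z‖ := by
  have hs := IsAlgClosed.splits P
  rw [hs.eval_eq_prod_roots, norm_mul, hs.natDegree_eq_card_roots]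
  refine mul_le_mul_of_nonneg_left ?_ (norm_nonneg _)
  have hroot : ∀ r ∈ P.roots, r.im = 0 := fun r hr => by
    by_contra h
    exact hP r h (isRoot_of_mem_roots hr)
  generalize P.roots = s at hroot
  induction s using Multiset.induction_on with
  | empty => simp
  | cons r s ih =>
    rw [Multiset.card_cons, Multiset.map_cons, Multiset.prod_cons, norm_mul, pow_succ']
    refine mul_le_mul ?_ (ih fun r hr => hroot r (Multiset.mem_cons_of_mem hr))
      (by positivity) (norm_nonneg _)
    have := abs_im_le_norm (z - r)
    rwa [sub_im, hroot r (Multiset.mem_cons_self r s), sub_zero] at this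

/-- Pointwise limits with nonzero values: the bound `RealRooted.le_norm_eval` passes to the limit
because the degree of the image polynomial and the nonvanishing of its leading coefficient do. -/
lemma isMultiplier_of_tendsto {γ : ℕ → ℕ → ℂ} {δ : ℕ → ℂ} (hγ : ∀ N, IsMultiplier (γ N))
    (hlim : ∀ k, Tendsto (fun N => γ N k) atTop (𝓝 (δ k))) (hδ : ∀ k, δ k ≠ 0) :
    IsMultiplier δ := by
  intro P hP z hz
  have hlead : P.leadingCoeff ≠ 0 := leadingCoeff_ne_zero.2 hP.ne_zero
  have hle : ∀ᶠ N in atTop, ‖P.leadingCoeff * γ N P.natDegree‖ * |z.im| ^ P.natDegree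
      ≤ ‖(diagOp (γ N) P).eval z‖ := by
    filter_upwards [(hlim P.natDegree).eventually_ne (hδ _)] with N hN
    have hcoeff : (diagOp (γ N) P).coeff P.natDegree = P.leadingCoeff * γ N P.natDegree :=
      diagOp_coeff _ _ _
    have hdeg : (diagOp (γ N) P).natDegree = P.natDegree := by
      refine natDegree_eq_of_le_of_coeff_ne_zero ?_ ?_
      · refine natDegree_le_iff_coeff_eq_zero.2 fun k hk => ?_
        rw [diagOp_coeff, coeff_eq_zero_of_natDegree_lt hk, zero_mul]
      · rw [hcoeff]
        exact mul_ne_zero hlead hN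
    have := (hγ N P hP).le_norm_eval z
    rwa [leadingCoeff, hdeg, hcoeff] at this
  have h1 : Tendsto (fun N => ‖P.leadingCoeff * γ N P.natDegree‖ * |z.im| ^ P.natDegree) atTop
      (𝓝 (‖P.leadingCoeff * δ P.natDegree‖ * |z.im| ^ P.natDegree)) :=
    ((hlim _).const_mul _).norm.mul_const _
  have h2 : Tendsto (fun N => ‖(diagOp (γ N) P).eval z‖) atTop
      (𝓝 ‖(diagOp δ P).eval z‖) := by
    simp only [diagOp_eval]
    exact (tendsto_finsetSum _ fun k _ => ((hlim k).const_mul _).mul_const _).norm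
  have h3 := le_of_tendsto_of_tendsto h1 h2 hle
  have h4 : 0 < ‖P.leadingCoeff * δ P.natDegree‖ * |z.im| ^ P.natDegree :=
    mul_pos (norm_pos_iff.2 (mul_ne_zero hlead (hδ _))) (pow_pos (abs_pos.2 hz) _)
  exact norm_pos_iff.1 (h4.trans_le h3)

/-! ### Gaussian multipliers -/

lemma isMultiplier_factor {b : ℝ} (hb : 0 ≤ b) :
    IsMultiplier (fun k => (1 + (b : ℂ) * k) * Complex.exp (-(b : ℂ) * k)) := by
  simpa using (isMultiplier_linear hb).mul (isMultiplier_exp (-b))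

lemma tendsto_gaussian {x : ℝ} (hx : 0 ≤ x) :
    Tendsto (fun m : ℕ => ((1 + x / √(m : ℝ)) * Real.exp (-(x / √(m : ℝ)))) ^ m) atTop
      (𝓝 (Real.exp (-(x ^ 2 / 2)))) := by
  have hsqrt : Tendsto (fun m : ℕ => √(m : ℝ)) atTop atTop :=
    Real.tendsto_sqrt_atTop.comp tendsto_natCast_atTop_atTop
  have ht : Tendsto (fun m : ℕ => x / √(m : ℝ)) atTop (𝓝 0) := hsqrt.const_div_atTop x
  have hlog : Tendsto (fun m : ℕ => (m : ℝ) * (Real.log (1 + x / √(m : ℝ)) - x / √(m : ℝ))) atTop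
      (𝓝 (-(x ^ 2 / 2))) := by
    rw [tendsto_iff_norm_sub_tendsto_zero]
    refine squeeze_zero' (.of_forall fun _ => norm_nonneg _) ?_ (hsqrt.const_div_atTop (2 * x ^ 3))
    filter_upwards [ht.eventually_le_const (show (0 : ℝ) < 1 / 2 by norm_num),
      eventually_gt_atTop 0] with m hm hm0
    have hs : 0 < √(m : ℝ) := Real.sqrt_pos.2 (by exact_mod_cast hm0)
    have hss : √(m : ℝ) ^ 2 = m := Real.sq_sqrt (Nat.cast_nonneg m)
    set s := √(m : ℝ)
    set t := x / s with htdef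
    have ht0 : 0 ≤ t := by positivity
    have hxt : x = t * s := by
      rw [htdef]
      field_simp
    -- Taylor expansion of `log (1 + t)` to second order, with cubic remainder.
    have hb := Real.abs_log_sub_add_sum_range_le (x := -t)
      (by rw [abs_neg, abs_of_nonneg ht0]; linarith) 2
    rw [abs_neg, abs_of_nonneg ht0, sub_neg_eq_add] at hb
    simp only [Finset.sum_range_succ, Finset.sum_range_zero] at hb
    have hrem : t ^ (2 + 1) / (1 - t) ≤ 2 * t ^ 3 := by
      rw [div_le_iff₀ (by linarith)]
      have h := mul_nonneg (pow_nonneg ht0 3) (by linarith : 0 ≤ 1 - 2 * t)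
      have e : 2 * t ^ 3 * (1 - t) - t ^ (2 + 1) = t ^ 3 * (1 - 2 * t) := by ring
      linarith
    rw [Real.norm_eq_abs, ← hss, hxt]
    have e1 : s ^ 2 * (Real.log (1 + t) - t) - -((t * s) ^ 2 / 2)
        = s ^ 2 * (0 + (-t) ^ (0 + 1) / ((0 : ℕ) + 1) + (-t) ^ (1 + 1) / ((1 : ℕ) + 1)
          + Real.log (1 + t)) := by
      push_cast
      ring
    have e2 : 2 * (t * s) ^ 3 / s = s ^ 2 * (2 * t ^ 3) := by
      field_simp
    rw [e1, abs_mul, abs_of_pos (by positivity : 0 < s ^ 2), e2]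
    exact mul_le_mul_of_nonneg_left (hb.trans hrem) (by positivity)
  refine ((Real.continuous_exp.tendsto _).comp hlog).congr fun m => ?_
  have : 0 < 1 + x / √(m : ℝ) := by positivity
  rw [Function.comp_apply, Real.exp_nat_mul, sub_eq_add_neg, Real.exp_add, Real.exp_log this]

lemma isMultiplier_gaussian (σ : ℝ) :
    IsMultiplier (fun k => Complex.exp (-((σ : ℂ) ^ 2 / 2 * (k : ℂ) ^ 2))) := by
  refine isMultiplier_of_tendsto (γ := fun m k =>
    ((1 + ((|σ| / √(m : ℝ) : ℝ) : ℂ) * k) * Complex.exp (-((|σ| / √(m : ℝ) : ℝ) : ℂ) * k)) ^ m)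
    (fun m => (isMultiplier_factor (by positivity)).pow m) (fun k => ?_) fun k => exp_ne_zero _
  have h := (continuous_ofReal.tendsto _).comp
    (tendsto_gaussian (x := |σ| * k) (by positivity))
  have e : ((Real.exp (-((|σ| * k) ^ 2 / 2)) : ℝ) : ℂ)
      = Complex.exp (-((σ : ℂ) ^ 2 / 2 * (k : ℂ) ^ 2)) := by
    rw [mul_pow, sq_abs]
    push_cast
    ring_nf
  rw [e] at h
  refine h.congr fun m => ?_
  simp only [Function.comp_apply]
  push_cast
  ring_nf

/-! ### Nonvanishing of `f` and the conclusion -/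

lemma exp_neg_sq_le {x : ℝ} (hx : 0 ≤ x) : Real.exp (-x ^ 2) ≤ (1 + x) * Real.exp (-x) := by
  have h1 : 1 + (x ^ 2 - x) ≤ Real.exp (x ^ 2 - x) := by
    linarith [Real.add_one_le_exp (x ^ 2 - x)]
  -- `(1 + x) (1 - x + x²) = 1 + x³ ≥ 1`.
  have h2 : 1 ≤ (1 + x) * Real.exp (x ^ 2 - x) := by
    nlinarith [mul_le_mul_of_nonneg_left h1 (by linarith : 0 ≤ 1 + x), pow_nonneg hx 3]
  calc Real.exp (-x ^ 2) ≤ Real.exp (-x ^ 2) * ((1 + x) * Real.exp (x ^ 2 - x)) :=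
        le_mul_of_one_le_right (Real.exp_pos _).le h2
    _ = (1 + x) * (Real.exp (-x ^ 2) * Real.exp (x ^ 2 - x)) := by ring
    _ = (1 + x) * Real.exp (-x) := by
        rw [← Real.exp_add]
        ring_nf

/-- The partial products of the canonical product stay away from zero at each natural number. -/
lemma le_norm_prod {α : ℕ → ℝ} (hsum : Summable fun j => α j ^ 2) (hα : ∀ j, α j ≤ 0) (k N : ℕ) :
    Real.exp (-((k : ℝ) ^ 2 * ∑' j, α j ^ 2)) ≤
      ‖∏ j ∈ Finset.range N, ((1 - (α j : ℂ) * k) * Complex.exp ((α j : ℂ) * k))‖ := by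
  rw [norm_prod]
  calc Real.exp (-((k : ℝ) ^ 2 * ∑' j, α j ^ 2))
      ≤ Real.exp (∑ j ∈ Finset.range N, -(-α j * k) ^ 2) := by
        refine Real.exp_le_exp.2 ?_
        have := mul_le_mul_of_nonneg_left
          (hsum.sum_le_tsum (Finset.range N) fun j _ => sq_nonneg _) (sq_nonneg (k : ℝ))
        rw [Finset.mul_sum] at this
        rw [Finset.sum_neg_distrib]
        refine neg_le_neg (le_trans (le_of_eq ?_) this)
        exact Finset.sum_congr rfl fun j _ => by ring
    _ = ∏ j ∈ Finset.range N, Real.exp (-(-α j * k) ^ 2) := Real.exp_sum _ _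
    _ ≤ _ := by
        refine Finset.prod_le_prod (fun j _ => (Real.exp_pos _).le) fun j _ => ?_
        have hx : 0 ≤ -α j * k := mul_nonneg (neg_nonneg.2 (hα j)) (Nat.cast_nonneg k)
        refine (exp_neg_sq_le hx).trans (le_of_eq ?_)
        have e : (1 - (α j : ℂ) * k) * Complex.exp ((α j : ℂ) * k)
            = (((1 + -α j * k) * Real.exp (-(-α j * k)) : ℝ) : ℂ) := by
          push_cast
          ring_nf
        rw [e, norm_real, Real.norm_of_nonneg (by positivity)]

/-- **Laguerre's theorem.** Let `f` be entire of Laguerre–Pólya form whose zeros are all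
negative reals (`m = 0` and `α_j ≤ 0`). If `p ∈ ℝ[X]` has only real complex roots, then
`f(X·d/dX)p = ∑_k a_k·f(k)·X^k` has only real complex roots. -/
theorem laguerre_theorem
    (f : ℂ → ℂ) (C c σ : ℝ) (α : ℕ → ℝ)
    (hC : C ≠ 0) (hsum : Summable fun j => α j ^ 2) (hα : ∀ j, α j ≤ 0)
    (hfeq : TendstoLocallyUniformly
      (fun (N : ℕ) (z : ℂ) => (C : ℂ) *
          Complex.exp (-(c : ℂ) * z - (σ : ℂ) ^ 2 / 2 * z ^ 2) *
          ∏ j ∈ Finset.range N, ((1 - (α j : ℂ) * z) * Complex.exp ((α j : ℂ) * z)))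
      f atTop)
    (p : Polynomial ℝ)
    (hp : ∀ z ∈ (p.map (algebraMap ℝ ℂ)).roots, z.im = 0) :
    ∀ z ∈ (∑ k ∈ Finset.range (p.natDegree + 1),
        Polynomial.C ((p.coeff k : ℂ) * f (k : ℂ)) * Polynomial.X ^ k).roots, z.im = 0 := by
  have hlim : ∀ k : ℕ, Tendsto (fun N : ℕ => (C : ℂ) *
      Complex.exp (-(c : ℂ) * k - (σ : ℂ) ^ 2 / 2 * (k : ℂ) ^ 2) *
      ∏ j ∈ Finset.range N, ((1 - (α j : ℂ) * k) * Complex.exp ((α j : ℂ) * k))) atTop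
      (𝓝 (f k)) := fun k =>
    hfeq.tendstoLocallyUniformlyOn (s := Set.univ) |>.tendsto_at (Set.mem_univ (k : ℂ))
  have hne : ∀ k : ℕ, f k ≠ 0 := by
    intro k
    have hA : 0 < ‖(C : ℂ) * Complex.exp (-(c : ℂ) * k - (σ : ℂ) ^ 2 / 2 * (k : ℂ) ^ 2)‖ :=
      norm_pos_iff.2 (mul_ne_zero (ofReal_ne_zero.2 hC) (exp_ne_zero _))
    have hle := ge_of_tendsto' (hlim k).norm fun N => by
      rw [norm_mul]
      exact mul_le_mul_of_nonneg_left (le_norm_prod hsum hα k N) hA.le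
    exact norm_pos_iff.1 ((mul_pos hA (Real.exp_pos _)).trans_le hle)
  have hf : IsMultiplier (fun k => f k) := by
    refine isMultiplier_of_tendsto (fun N => ?_) hlim hne
    have h1 := (isMultiplier_const (ofReal_ne_zero.2 hC)).mul
      ((isMultiplier_exp (-c)).mul (isMultiplier_gaussian σ))
    have h2 := IsMultiplier.prod (fun j => isMultiplier_factor (neg_nonneg.2 (hα j))) N
    convert h1.mul h2 using 2 with k
    simp [sub_eq_add_neg, Complex.exp_add]
  intro z hz
  by_cases hp0 : p = 0
  · simp [hp0] at hz
  have hP0 : p.map (algebraMap ℝ ℂ) ≠ 0 := by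
    simpa [Polynomial.map_eq_zero] using hp0
  have hP : RealRooted (p.map (algebraMap ℝ ℂ)) := fun w hw h0 =>
    hw (hp w ((mem_roots hP0).2 h0))
  by_contra hzim
  refine hf _ hP z hzim ?_
  have hroot := isRoot_of_mem_roots hz
  rw [IsRoot.def] at hroot
  simpa [diagOp, natDegree_map, coeff_map] using hroot
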